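/- arXiv:1905.02661 — 4 statements merged into one kernel-verified Lean document; each statement's English description precedes it below -/
import Mathlib

section
/- Cone inequality for the real part (the Claim in Step 2 of the proof of Theorem 3.5, Eq. (B.4)): Let I, J ≥ 1, let X be a topological space, let K ⊆ X be a compact subset, let m : X → (I×J complex matrices) be continuous, and let Q be a quadratic polynomial on ℂ^J. Suppose that Re Q(λ) ≥ 0 for every λ ∈ ℂ^J such that m(η)·λ = 0 for some η ∈ K. Then for every δ > 0 there exists a constant C ∈ (0, ∞), depending only on δ, K, m, Q, such that Re Q(λ) ≥ −δ‖λ‖² − C‖m(η)·λ‖² for every λ ∈ ℂ^J and every η ∈ K. -/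
open scoped BigOperators

/-!
Both sides of the inequality are homogeneous of degree two in `λ`, so it is enough to prove it on
the compact set (unit sphere of `ℂ^J`) × `K`. There `Re Q(λ) + δ‖λ‖²` is continuous and strictly
positive wherever the continuous nonnegative function `‖m(η)·λ‖²` vanishes, and
`exists_forall_pos_add_mul` shows that a large enough multiple of the latter makes the sum positive
everywhere. Any norm may be used to choose the unit sphere; the sup norm of `Fin J → ℂ` is taken.
-/

/-- Penalization on a compact set: the open sets `{f + n g > 0}` increase with `n` and cover `T`,
so one of them contains `T`. -/
lemma exists_forall_pos_add_mul {Y : Type*} [TopologicalSpace Y] {T : Set Y} (hT : IsCompact T)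
    {f g : Y → ℝ} (hf : Continuous f) (hg : Continuous g) (hg0 : ∀ y, 0 ≤ g y)
    (hfg : ∀ y ∈ T, g y = 0 → 0 < f y) :
    ∃ C : ℝ, 0 < C ∧ ∀ y ∈ T, 0 < f y + C * g y := by
  have hmono : Monotone fun n : ℕ => {y | 0 < f y + (n : ℝ) * g y} := by
    intro a b hab y hy
    have hab' : (a : ℝ) ≤ b := by exact_mod_cast hab
    have := mul_le_mul_of_nonneg_right hab' (hg0 y)
    simp only [Set.mem_setOf_eq] at hy ⊢
    linarith
  obtain ⟨n, hn⟩ := hT.elim_directed_cover (fun n : ℕ => {y | 0 < f y + (n : ℝ) * g y})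
    (fun n => isOpen_lt continuous_const (hf.add (continuous_const.mul hg)))
    (by
      intro y hy
      rw [Set.mem_iUnion]
      rcases (hg0 y).eq_or_lt with h | h
      · exact ⟨0, by simpa using hfg y hy h.symm⟩
      · obtain ⟨n, hn⟩ := exists_nat_gt (-f y / g y)
        refine ⟨n, ?_⟩
        rw [div_lt_iff₀ h] at hn
        simp only [Set.mem_setOf_eq]
        linarith)
    hmono.directed_le
  refine ⟨(n : ℝ) + 1, by positivity, fun y hy => ?_⟩
  have h1 : 0 < f y + (n : ℝ) * g y := hn hy
  have h2 := hg0 y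
  linarith

/-- Cone inequality for the real part (Claim in Step 2 of the proof of Theorem 3.5):
if `Re Q ≥ 0` on the cone `{λ | m(η)·λ = 0 for some η ∈ K}` with `K` compact and `m`
continuous, then for every `δ > 0` there is `C > 0` with
`Re Q(λ) ≥ -δ‖λ‖² - C‖m(η)·λ‖²` for all `λ` and all `η ∈ K`. -/
theorem cone_inequality_re (I J : ℕ) (hI : 1 ≤ I) (hJ : 1 ≤ J)
    (X : Type*) [TopologicalSpace X] (K : Set X) (hK : IsCompact K)
    (m : X → Matrix (Fin I) (Fin J) ℂ) (hm : Continuous m)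
    (Qc : Fin J → Fin J → ℂ) (Q : (Fin J → ℂ) → ℂ)
    (hQ : ∀ lam : Fin J → ℂ,
      Q lam = ∑ j : Fin J, ∑ l : Fin J, Qc j l * lam j * (starRingEnd ℂ) (lam l))
    (hcone : ∀ lam : Fin J → ℂ, (∃ η ∈ K, (m η).mulVec lam = 0) → 0 ≤ (Q lam).re) :
    ∀ δ : ℝ, 0 < δ → ∃ C : ℝ, 0 < C ∧
      ∀ (lam : Fin J → ℂ) (η : X), η ∈ K →
        (Q lam).re ≥ -δ * (∑ j : Fin J, ‖lam j‖ ^ 2)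
          - C * (∑ i : Fin I, ‖(m η).mulVec lam i‖ ^ 2) := by
  intro δ hδ
  have hQcont : Continuous Q := by
    rw [funext hQ]
    fun_prop
  have hmul : Continuous fun p : (Fin J → ℂ) × X => (m p.2).mulVec p.1 :=
    (hm.comp continuous_snd).matrix_mulVec continuous_fst
  obtain ⟨C, hC, hpos⟩ := exists_forall_pos_add_mul
    ((isCompact_sphere (0 : Fin J → ℂ) 1).prod hK)
    (f := fun p => (Q p.1).re + δ * ∑ j, ‖p.1 j‖ ^ 2)
    (g := fun p => ∑ i, ‖(m p.2).mulVec p.1 i‖ ^ 2)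
    (by
      have := Complex.continuous_re.comp (hQcont.comp (continuous_fst (X := Fin J → ℂ) (Y := X)))
      exact this.add (by fun_prop))
    (continuous_finsetSum _ fun i _ => (((continuous_apply i).comp hmul).norm.pow 2))
    (fun p => by positivity)
    (by
      rintro ⟨v, η⟩ ⟨hv, hη⟩ h0
      have hmv : (m η).mulVec v = 0 := by
        funext i
        have := (Finset.sum_eq_zero_iff_of_nonneg (fun i _ => by positivity)).1 h0 i
          (Finset.mem_univ i)
        simpa using this
      have hQv := hcone v ⟨η, hη, hmv⟩
      have hv0 : v ≠ 0 := by
        rintro rfl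
        simp at hv
      obtain ⟨j, hj⟩ := Function.ne_iff.1 hv0
      have hsum : 0 < ∑ j, ‖v j‖ ^ 2 :=
        Finset.sum_pos' (fun _ _ => by positivity)
          ⟨j, Finset.mem_univ j, pow_pos (norm_pos_iff.2 hj) 2⟩
      have := mul_pos hδ hsum
      simp only
      linarith)
  refine ⟨C, hC, fun lam η hη => ?_⟩
  by_cases hlam : lam = 0
  · subst hlam
    simp [hQ]
  have hr : 0 < ‖lam‖ := norm_pos_iff.2 hlam
  obtain ⟨r, v, hr0, hv, rfl⟩ : ∃ (r : ℝ) (v : Fin J → ℂ), 0 < r ∧ ‖v‖ = 1 ∧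
      lam = (r : ℂ) • v := by
    refine ⟨‖lam‖, ((‖lam‖ : ℂ))⁻¹ • lam, hr, ?_, ?_⟩
    · rw [norm_smul, norm_inv, Complex.norm_real, norm_norm, inv_mul_cancel₀ hr.ne']
    · rw [smul_smul, mul_inv_cancel₀ (by exact_mod_cast hr.ne'), one_smul]
  have key := hpos (v, η) ⟨by simpa using hv, hη⟩
  have e1 : (Q ((r : ℂ) • v)).re = r ^ 2 * (Q v).re := by
    have : Q ((r : ℂ) • v) = ((r ^ 2 : ℝ) : ℂ) * Q v := by
      rw [hQ, hQ, Finset.mul_sum]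
      refine Finset.sum_congr rfl fun j _ => ?_
      rw [Finset.mul_sum]
      refine Finset.sum_congr rfl fun l _ => ?_
      simp only [Pi.smul_apply, smul_eq_mul, map_mul, Complex.conj_ofReal]
      push_cast
      ring
    rw [this, Complex.re_ofReal_mul]
  have e2 : ∀ {n : ℕ} (w : Fin n → ℂ),
      ∑ j, ‖((r : ℂ) • w) j‖ ^ 2 = r ^ 2 * ∑ j, ‖w j‖ ^ 2 := by
    intro n w
    rw [Finset.mul_sum]
    refine Finset.sum_congr rfl fun j _ => ?_
    rw [Pi.smul_apply, norm_smul, Complex.norm_real, mul_pow, Real.norm_eq_abs, sq_abs]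
  rw [Matrix.mulVec_smul, e1, e2, e2]
  have := mul_pos (pow_pos hr0 2) key
  simp only at this
  linarith
end

section
/- Cone inequality for the imaginary part (the Claim in Step 2 of the proof of Theorem 3.5, Eq. (B.5)): Let I, J ≥ 1, let X be a topological space, let K ⊆ X be a compact subset, let m : X → (I×J complex matrices) be continuous, and let Q be a quadratic polynomial on ℂ^J. Suppose that Im Q(λ) ≥ 0 for every λ ∈ ℂ^J such that m(η)·λ = 0 for some η ∈ K. Then for every δ > 0 there exists a constant C ∈ (0, ∞), depending only on δ, K, m, Q, such that Im Q(λ) ≥ −δ‖λ‖² − C‖m(η)·λ‖² for every λ ∈ ℂ^J and every η ∈ K. -/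
/-!
Both sides of the inequality are homogeneous of degree two in `λ`, so it suffices to treat `λ`
in the unit sphere `S`, and `S × K` is compact. There `F = Im Q + δ‖λ‖²` is strictly positive
wherever `G = ‖m(η)λ‖²` vanishes, by the cone hypothesis. Hence the increasing open sets
`{F + n G > 0}` cover `S × K`, and by compactness one of them is enough
(`exists_add_mul_pos_of_isCompact`).
The sphere used is that of the sup norm on `Fin J → ℂ`; any compact set avoiding `0` and
meeting every ray would do.
-/

open scoped BigOperators

/-- A penalization principle: on a compact set, if `F > 0` wherever the nonnegative penalty `G`
vanishes, then a large enough multiple of `G` makes `F + C * G` positive everywhere. -/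
lemma exists_add_mul_pos_of_isCompact {Y : Type*} [TopologicalSpace Y] {T : Set Y}
    (hT : IsCompact T) {F G : Y → ℝ} (hF : Continuous F) (hG : Continuous G)
    (hG0 : ∀ y, 0 ≤ G y) (h : ∀ y ∈ T, G y = 0 → 0 < F y) :
    ∃ C : ℝ, 0 < C ∧ ∀ y ∈ T, 0 < F y + C * G y := by
  obtain ⟨n, hn⟩ := hT.elim_directed_cover (fun n : ℕ => {y | 0 < F y + n * G y})
    (fun n => isOpen_lt continuous_const (by fun_prop))
    (by
      intro y hy
      rw [Set.mem_iUnion]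
      rcases (hG0 y).eq_or_lt with h0 | h0
      · exact ⟨0, by simpa using h y hy h0.symm⟩
      · obtain ⟨n, hn⟩ := exists_nat_gt (-F y / G y)
        rw [div_lt_iff₀ h0] at hn
        refine ⟨n, ?_⟩
        simp only [Set.mem_ofPred_eq]
        linarith)
    (Monotone.directed_le (by
      intro a b hab y hy
      simp only [Set.mem_ofPred_eq] at hy ⊢
      have h1 : (a : ℝ) * G y ≤ b * G y :=
        mul_le_mul_of_nonneg_right (by exact_mod_cast hab) (hG0 y)
      linarith))
  -- `n` may be `0`, whereas the constant has to be positive.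
  refine ⟨n + 1, by positivity, fun y hy => ?_⟩
  have h1 := hn hy
  simp only [Set.mem_ofPred_eq] at h1
  nlinarith [hG0 y]

/-- Cone inequality for the imaginary part (Claim in Step 2 of the proof of Theorem 3.5):
if `Im Q ≥ 0` on the cone `{λ | m(η)·λ = 0 for some η ∈ K}` with `K` compact and `m`
continuous, then for every `δ > 0` there is `C > 0` with
`Im Q(λ) ≥ -δ‖λ‖² - C‖m(η)·λ‖²` for all `λ` and all `η ∈ K`. -/
theorem cone_inequality_im (I J : ℕ) (hI : 1 ≤ I) (hJ : 1 ≤ J)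
    (X : Type*) [TopologicalSpace X] (K : Set X) (hK : IsCompact K)
    (m : X → Matrix (Fin I) (Fin J) ℂ) (hm : Continuous m)
    (Qc : Fin J → Fin J → ℂ) (Q : (Fin J → ℂ) → ℂ)
    (hQ : ∀ lam : Fin J → ℂ,
      Q lam = ∑ j : Fin J, ∑ l : Fin J, Qc j l * lam j * (starRingEnd ℂ) (lam l))
    (hcone : ∀ lam : Fin J → ℂ, (∃ η ∈ K, (m η).mulVec lam = 0) → 0 ≤ (Q lam).im) :
    ∀ δ : ℝ, 0 < δ → ∃ C : ℝ, 0 < C ∧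
      ∀ (lam : Fin J → ℂ) (η : X), η ∈ K →
        (Q lam).im ≥ -δ * (∑ j : Fin J, ‖lam j‖ ^ 2)
          - C * (∑ i : Fin I, ‖(m η).mulVec lam i‖ ^ 2) := by
  intro δ hδ
  have hQcont : Continuous Q := by
    rw [funext hQ]
    fun_prop
  obtain ⟨C, hC, hpos⟩ := exists_add_mul_pos_of_isCompact
    (T := Metric.sphere (0 : Fin J → ℂ) 1 ×ˢ K)
    (F := fun p => (Q p.1).im + δ * ∑ j, ‖p.1 j‖ ^ 2)
    (G := fun p => ∑ i, ‖(m p.2).mulVec p.1 i‖ ^ 2)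
    ((isCompact_sphere _ _).prod hK)
    (by
      have h1 : Continuous fun p : (Fin J → ℂ) × X => (Q p.1).im :=
        Complex.continuous_im.comp (hQcont.comp continuous_fst)
      fun_prop)
    (by
      have h1 : Continuous fun p : (Fin J → ℂ) × X => (m p.2).mulVec p.1 :=
        (hm.comp continuous_snd).matrix_mulVec continuous_fst
      fun_prop)
    (fun p => by positivity)
    (by
      rintro ⟨lam, η⟩ ⟨hlam, hη⟩ h0
      have hker : (m η).mulVec lam = 0 := by
        funext i
        have h1 := (Finset.sum_eq_zero_iff_of_nonneg (fun i _ => by positivity)).1 h0 i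
          (Finset.mem_univ i)
        simpa using h1
      have hne : lam ≠ 0 := by
        rintro rfl
        simp at hlam
      obtain ⟨j, hj⟩ := Function.ne_iff.1 hne
      have hsum : 0 < ∑ j, ‖lam j‖ ^ 2 :=
        Finset.sum_pos' (fun _ _ => by positivity)
          ⟨j, Finset.mem_univ j, by have := norm_pos_iff.2 hj; positivity⟩
      have := hcone lam ⟨η, hη, hker⟩
      have := mul_pos hδ hsum
      simp only
      linarith)
  refine ⟨C, hC, fun lam η hη => ?_⟩
  rcases eq_or_ne lam 0 with rfl | hne
  · simp [hQ]
  -- Rescale to the unit sphere: `lam = r • u` with `‖u‖ = 1`.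
  obtain ⟨r, u, hu, rfl⟩ : ∃ (r : ℝ) (u : Fin J → ℂ), ‖u‖ = 1 ∧ lam = (r : ℂ) • u := by
    have hn : (‖lam‖ : ℂ) ≠ 0 := by exact_mod_cast (norm_pos_iff.2 hne).ne'
    refine ⟨‖lam‖, (‖lam‖ : ℂ)⁻¹ • lam, ?_, by rw [smul_inv_smul₀ hn]⟩
    have hn' := (norm_pos_iff.2 hne).ne'
    rw [norm_smul, norm_inv, Complex.norm_real, norm_norm, inv_mul_cancel₀ hn']
  have hQr : Q ((r : ℂ) • u) = ((r ^ 2 : ℝ) : ℂ) * Q u := by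
    simp only [hQ, Finset.mul_sum, Pi.smul_apply, smul_eq_mul, map_mul, Complex.conj_ofReal]
    refine Finset.sum_congr rfl fun j _ => Finset.sum_congr rfl fun l _ => ?_
    push_cast
    ring
  have hmain := mul_nonneg (sq_nonneg r)
    (hpos (u, η) ⟨by simpa using hu, hη⟩).le
  rw [hQr, Complex.im_ofReal_mul, Matrix.mulVec_smul]
  simp only [Pi.smul_apply, smul_eq_mul, norm_mul, Complex.norm_real, mul_pow, Real.norm_eq_abs,
    sq_abs, ← Finset.mul_sum]
  simp only at hmain
  linarith
end

section
/- Liminf inequality on the high-frequency region (Step 3 of the proof of Theorem 3.5, Eq. (B.6), abstract measure-space form): Let I, J ≥ 1, let (Ω, μ) be a measure space, let X be a topological space, let K ⊆ X be compact, let m : X → (I×J complex matrices) be continuous, and let Φ : Ω → K be Borel measurable. Let Q be a quadratic polynomial on ℂ^J such that Re Q(λ) ≥ 0 for every λ ∈ ℂ^J with m(η)·λ = 0 for some η ∈ K. Let (w_k)_{k∈ℕ} be a sequence of strongly measurable functions Ω → ℂ^J such that sup_k ∫_Ω ‖w_k‖² dμ < ∞ and ∫_Ω ‖m(Φ(ω))·w_k(ω)‖²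 dμ(ω) → 0 as k → ∞. Then liminf_{k→∞} ∫_Ω Re Q(w_k(ω)) dμ(ω) ≥ 0. -/
open MeasureTheory Filter
open scoped BigOperators ENNReal Topology

/-!
The analytic content is the pointwise estimate `exists_penalty_bound`: for every `ε > 0` there is
a constant `n` with `-ε ‖v‖² - n ‖m(η) v‖² ≤ Re Q(v)` for all `η ∈ K` and all `v`. By homogeneity
it is enough to treat `v` in the unit sphere `S`. The open sets
`{(η, v) | 0 < Re Q(v) + ε ‖v‖² + n ‖m(η) v‖²}` increase with `n` and cover `K × S`: where
`m(η) v = 0` the cone hypothesis applies, and elsewhere the last term eventually dominates.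
Compactness of `K × S` gives a single `n`.

Integrating the estimate at `(Φ(ω), w_k(ω))` bounds `∫ Re Q(w_k)` below by `-ε M - n o(1)`, so the
liminf is at least `-ε (M + 1)` for every `ε > 0`. Since `|Re Q(v)| ≤ C ‖v‖²`, the integrals exist
and are bounded above, which makes the real-valued liminf meaningful.
-/

/-- The squared Euclidean norm, written as a sum because `Fin n → ℂ` carries the sup norm. -/
noncomputable def euclidSq {n : ℕ} (v : Fin n → ℂ) : ℝ := ∑ j, ‖v j‖ ^ 2

/-- The quadratic polynomial with coefficients `c`. -/
noncomputable def quadPoly {n : ℕ} (c : Fin n → Fin n → ℂ) (v : Fin n → ℂ) : ℂ :=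
  ∑ j, ∑ l, c j l * v j * (starRingEnd ℂ) (v l)

lemma euclidSq_nonneg {n : ℕ} (v : Fin n → ℂ) : 0 ≤ euclidSq v :=
  Finset.sum_nonneg fun _ _ => by positivity

lemma euclidSq_pos {n : ℕ} {v : Fin n → ℂ} (hv : v ≠ 0) : 0 < euclidSq v := by
  obtain ⟨j, hj⟩ := Function.ne_iff.mp hv
  refine Finset.sum_pos' (fun _ _ => by positivity) ⟨j, Finset.mem_univ _, ?_⟩
  have : 0 < ‖v j‖ := norm_pos_iff.mpr hj
  positivity

lemma continuous_euclidSq {n : ℕ} : Continuous (euclidSq (n := n)) := by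
  unfold euclidSq; fun_prop

lemma continuous_quadPoly {n : ℕ} (c : Fin n → Fin n → ℂ) : Continuous (quadPoly c) := by
  unfold quadPoly
  refine continuous_finsetSum _ fun j _ => continuous_finsetSum _ fun l _ => ?_
  exact (continuous_const.mul (continuous_apply j)).mul
    (Complex.continuous_conj.comp (continuous_apply l))

lemma euclidSq_real_smul {n : ℕ} (r : ℝ) (v : Fin n → ℂ) :
    euclidSq ((r : ℂ) • v) = r ^ 2 * euclidSq v := by
  simp [euclidSq, Finset.mul_sum, mul_pow]

lemma quadPoly_real_smul {n : ℕ} (c : Fin n → Fin n → ℂ) (r : ℝ) (v : Fin n → ℂ) :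
    quadPoly c ((r : ℂ) • v) = ((r ^ 2 : ℝ) : ℂ) * quadPoly c v := by
  simp only [quadPoly, Finset.mul_sum, Pi.smul_apply, smul_eq_mul, map_mul, Complex.conj_ofReal]
  refine Finset.sum_congr rfl fun j _ => Finset.sum_congr rfl fun l _ => ?_
  push_cast
  ring

lemma norm_quadPoly_le {n : ℕ} (c : Fin n → Fin n → ℂ) (v : Fin n → ℂ) :
    ‖quadPoly c v‖ ≤ (∑ j, ∑ l, ‖c j l‖) * euclidSq v := by
  simp only [quadPoly, Finset.sum_mul]
  refine norm_sum_le_of_le _ fun j _ => norm_sum_le_of_le _ fun l _ => ?_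
  have hle : ∀ i, ‖v i‖ ^ 2 ≤ euclidSq v := fun i =>
    Finset.single_le_sum (f := fun i => ‖v i‖ ^ 2) (fun _ _ => by positivity) (Finset.mem_univ i)
  have hprod : ‖v j‖ * ‖v l‖ ≤ euclidSq v := by
    nlinarith [hle j, hle l, sq_nonneg (‖v j‖ - ‖v l‖)]
  rw [norm_mul, norm_mul, RCLike.norm_conj, mul_assoc]
  exact mul_le_mul_of_nonneg_left hprod (norm_nonneg _)

/-- Off the cone, a negative value of `Re Q` is controlled by `‖m(η) v‖²`, uniformly over the
compact set `K` and up to an arbitrarily small multiple of `‖v‖²`. -/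
lemma exists_penalty_bound {I J : ℕ} {X : Type*} [TopologicalSpace X] {K : Set X}
    (hK : IsCompact K) {m : X → Matrix (Fin I) (Fin J) ℂ} (hm : Continuous m)
    (c : Fin J → Fin J → ℂ)
    (hcone : ∀ v : Fin J → ℂ, (∃ η ∈ K, (m η).mulVec v = 0) → 0 ≤ (quadPoly c v).re)
    {ε : ℝ} (hε : 0 < ε) :
    ∃ n : ℕ, ∀ η ∈ K, ∀ v : Fin J → ℂ,
      -(ε * euclidSq v) - n * euclidSq ((m η).mulVec v) ≤ (quadPoly c v).re := by
  let F : ℕ → X × (Fin J → ℂ) → ℝ := fun n p =>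
    (quadPoly c p.2).re + ε * euclidSq p.2 + n * euclidSq ((m p.1).mulVec p.2)
  have hF : ∀ n, Continuous (F n) := fun n =>
    ((Complex.continuous_re.comp ((continuous_quadPoly c).comp continuous_snd)).add
      (continuous_const.mul (continuous_euclidSq.comp continuous_snd))).add
      (continuous_const.mul (continuous_euclidSq.comp
        ((hm.comp continuous_fst).matrix_mulVec continuous_snd)))
  have hmono : Monotone fun n => {p | 0 < F n p} := by
    intro a b hab p (hp : 0 < F a p)
    have hab' : (a : ℝ) ≤ b := by exact_mod_cast hab
    have := mul_le_mul_of_nonneg_right hab' (euclidSq_nonneg ((m p.1).mulVec p.2))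
    change 0 < F b p
    simp only [F] at hp ⊢
    linarith
  obtain ⟨n, hn⟩ := (hK.prod (isCompact_sphere (0 : Fin J → ℂ) 1)).elim_directed_cover
    (fun n => {p | 0 < F n p}) (fun n => isOpen_lt continuous_const (hF n))
    (by
      rintro ⟨η, v⟩ ⟨hη, hv⟩
      have hv0 : v ≠ 0 := by
        rintro rfl
        simp at hv
      have hpos := mul_pos hε (euclidSq_pos hv0)
      rw [Set.mem_iUnion]
      by_cases h0 : (m η).mulVec v = 0
      · refine ⟨0, ?_⟩
        have := hcone v ⟨η, hη, h0⟩
        simp only [F, Set.mem_ofPred_eq, Nat.cast_zero, zero_mul]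
        linarith
      · have hT := euclidSq_pos h0
        obtain ⟨n, hn⟩ := exists_nat_gt (-(quadPoly c v).re / euclidSq ((m η).mulVec v))
        rw [div_lt_iff₀ hT] at hn
        refine ⟨n, ?_⟩
        simp only [F, Set.mem_ofPred_eq]
        linarith)
    hmono.directed_le
  refine ⟨n, fun η hη v => ?_⟩
  by_cases hv : v = 0
  · subst hv
    simp [quadPoly, euclidSq]
  have hnorm : 0 < ‖v‖ := norm_pos_iff.mpr hv
  have hmem : (η, ((‖v‖⁻¹ : ℝ) : ℂ) • v) ∈ K ×ˢ Metric.sphere (0 : Fin J → ℂ) 1 := by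
    refine ⟨hη, ?_⟩
    simp [norm_smul, hnorm.ne']
  have h := hn hmem
  simp only [F, Set.mem_ofPred_eq, Matrix.mulVec_smul, euclidSq_real_smul, quadPoly_real_smul,
    Complex.re_ofReal_mul] at h
  have hr : 0 < (‖v‖⁻¹ : ℝ) ^ 2 := by positivity
  have : 0 < (‖v‖⁻¹ : ℝ) ^ 2 * ((quadPoly c v).re + ε * euclidSq v
      + n * euclidSq ((m η).mulVec v)) := by linarith
  have := pos_of_mul_pos_right this hr.le
  linarith

lemma ofReal_euclidSq {n : ℕ} (v : Fin n → ℂ) :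
    ENNReal.ofReal (euclidSq v) = ∑ j, (‖v j‖₊ : ℝ≥0∞) ^ 2 := by
  rw [euclidSq, ENNReal.ofReal_sum_of_nonneg fun _ _ => by positivity]
  refine Finset.sum_congr rfl fun j _ => ?_
  rw [ENNReal.ofReal_pow (norm_nonneg _), ofReal_norm, enorm_eq_nnnorm]

lemma integrable_euclidSq {n : ℕ} {Ω : Type*} [MeasurableSpace Ω] {μ : Measure Ω}
    {f : Ω → Fin n → ℂ} (hf : Measurable f)
    (h : ∫⁻ ω, ∑ j, (‖f ω j‖₊ : ℝ≥0∞) ^ 2 ∂μ < ⊤) : Integrable (fun ω => euclidSq (f ω)) μ := by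
  refine ⟨(continuous_euclidSq.measurable.comp hf).aestronglyMeasurable, ?_⟩
  rw [hasFiniteIntegral_iff_ofReal (ae_of_all _ fun ω => euclidSq_nonneg _)]
  simpa only [ofReal_euclidSq] using h

lemma integral_euclidSq {n : ℕ} {Ω : Type*} [MeasurableSpace Ω] {μ : Measure Ω}
    {f : Ω → Fin n → ℂ} (hf : Measurable f) :
    ∫ ω, euclidSq (f ω) ∂μ = (∫⁻ ω, ∑ j, (‖f ω j‖₊ : ℝ≥0∞) ^ 2 ∂μ).toReal := by
  rw [integral_eq_lintegral_of_nonneg_ae (ae_of_all _ fun ω => euclidSq_nonneg _)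
    (continuous_euclidSq.measurable.comp hf).aestronglyMeasurable]
  simp only [ofReal_euclidSq]

/-- Liminf inequality on the high-frequency region (Step 3 of the proof of Theorem
3.5, abstract measure-space form): if `Re Q ≥ 0` on the cone of the multiplier `m`
over the compact set `K`, the sequence `(w_k)` is bounded in `L²` and
`∫ ‖m(Φ(·))·w_k‖² dμ → 0`, then `liminf ∫ Re Q(w_k) dμ ≥ 0`. -/
theorem liminf_re_quadratic_nonneg (I J : ℕ) (hI : 1 ≤ I) (hJ : 1 ≤ J)
    (Ω : Type*) [MeasurableSpace Ω] (μ : Measure Ω)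
    (X : Type*) [TopologicalSpace X] [MeasurableSpace X] [BorelSpace X]
    (K : Set X) (hK : IsCompact K)
    (m : X → Matrix (Fin I) (Fin J) ℂ) (hm : Continuous m)
    (Φ : Ω → X) (hΦ : Measurable Φ) (hΦK : ∀ ω, Φ ω ∈ K)
    (Qc : Fin J → Fin J → ℂ) (Q : (Fin J → ℂ) → ℂ)
    (hQ : ∀ lam : Fin J → ℂ,
      Q lam = ∑ j : Fin J, ∑ l : Fin J, Qc j l * lam j * (starRingEnd ℂ) (lam l))
    (hcone : ∀ lam : Fin J → ℂ, (∃ η ∈ K, (m η).mulVec lam = 0) → 0 ≤ (Q lam).re)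
    (w : ℕ → Ω → (Fin J → ℂ))
    (hmeas : ∀ k, StronglyMeasurable (w k))
    (hbound : ∃ M : ℝ≥0∞, M < ⊤ ∧ ∀ k,
      (∫⁻ ω, ∑ j : Fin J, (‖w k ω j‖₊ : ℝ≥0∞) ^ 2 ∂μ) ≤ M)
    (hconv : Tendsto
      (fun k => ∫⁻ ω, ∑ i : Fin I, (‖(m (Φ ω)).mulVec (w k ω) i‖₊ : ℝ≥0∞) ^ 2 ∂μ)
      atTop (𝓝 0)) :
    0 ≤ atTop.liminf (fun k => ∫ ω, (Q (w k ω)).re ∂μ) := by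
  obtain ⟨M, hM, hbound⟩ := hbound
  obtain rfl : Q = quadPoly Qc := funext hQ
  have hw : ∀ k, Measurable (w k) := fun k => (hmeas k).measurable
  have hmw : ∀ k, Measurable fun ω => (m (Φ ω)).mulVec (w k ω) := by
    intro k
    refine measurable_pi_lambda _ fun i => ?_
    simp only [Matrix.mulVec, dotProduct]
    refine Finset.measurable_sum _ fun j _ => ?_
    have hij : Measurable fun x => m x i j := (hm.matrix_elem i j).measurable
    exact (hij.comp hΦ).mul ((measurable_pi_apply j).comp (hw k))
  have hS : ∀ k, Integrable (fun ω => euclidSq (w k ω)) μ := fun k =>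
    integrable_euclidSq (hw k) ((hbound k).trans_lt hM)
  have hSle : ∀ k, ∫ ω, euclidSq (w k ω) ∂μ ≤ M.toReal := fun k => by
    rw [integral_euclidSq (hw k)]
    exact ENNReal.toReal_mono hM.ne (hbound k)
  have hQle : ∀ v, |(quadPoly Qc v).re| ≤ (∑ j, ∑ l, ‖Qc j l‖) * euclidSq v := fun v =>
    (Complex.abs_re_le_norm _).trans (norm_quadPoly_le Qc v)
  have hQint : ∀ k, Integrable (fun ω => (quadPoly Qc (w k ω)).re) μ := fun k =>
    ((hS k).const_mul (∑ j, ∑ l, ‖Qc j l‖)).mono'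
      ((Complex.continuous_re.comp (continuous_quadPoly Qc)).measurable.comp
        (hw k)).aestronglyMeasurable
      (ae_of_all _ fun ω => hQle _)
  have hupper : ∀ k, ∫ ω, (quadPoly Qc (w k ω)).re ∂μ ≤ (∑ j, ∑ l, ‖Qc j l‖) * M.toReal := by
    intro k
    calc ∫ ω, (quadPoly Qc (w k ω)).re ∂μ
        ≤ ∫ ω, (∑ j, ∑ l, ‖Qc j l‖) * euclidSq (w k ω) ∂μ :=
          integral_mono (hQint k) ((hS k).const_mul _) fun ω => (le_abs_self _).trans (hQle _)
      _ = (∑ j, ∑ l, ‖Qc j l‖) * ∫ ω, euclidSq (w k ω) ∂μ := integral_const_mul _ _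
      _ ≤ _ := mul_le_mul_of_nonneg_left (hSle k) (by positivity)
  have hcob : IsCoboundedUnder (· ≥ ·) atTop fun k => ∫ ω, (quadPoly Qc (w k ω)).re ∂μ :=
    (isBoundedUnder_of ⟨_, hupper⟩ : IsBoundedUnder (· ≤ ·) atTop _).isCoboundedUnder_ge
  have hconv' : Tendsto (fun k => ∫ ω, euclidSq ((m (Φ ω)).mulVec (w k ω)) ∂μ) atTop (𝓝 0) := by
    simp only [fun k => integral_euclidSq (μ := μ) (hmw k)]
    exact (ENNReal.tendsto_toReal ENNReal.zero_ne_top).comp hconv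
  have key : ∀ ε > 0, -(ε * (M.toReal + 1)) ≤
      atTop.liminf fun k => ∫ ω, (quadPoly Qc (w k ω)).re ∂μ := by
    intro ε hε
    obtain ⟨n, hn⟩ := exists_penalty_bound hK hm Qc hcone hε
    have hsmall : ∀ᶠ k in atTop, n * ∫ ω, euclidSq ((m (Φ ω)).mulVec (w k ω)) ∂μ < ε := by
      have h := hconv'.const_mul (n : ℝ)
      rw [mul_zero] at h
      exact h.eventually_lt_const hε
    refine le_liminf_of_le hcob ?_
    filter_upwards [hsmall, hconv.eventually_lt_const ENNReal.zero_lt_top] with k hk hfin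
    have hT := integrable_euclidSq (hmw k) hfin
    have hlow := integral_mono (((hS k).const_mul ε).neg.sub (hT.const_mul (n : ℝ))) (hQint k)
      fun ω => hn (Φ ω) (hΦK ω) (w k ω)
    rw [integral_sub' ((hS k).const_mul ε).neg (hT.const_mul (n : ℝ)), integral_neg',
      integral_const_mul, integral_const_mul] at hlow
    have := mul_le_mul_of_nonneg_left (hSle k) hε.le
    linarith
  have hM1 : 0 < M.toReal + 1 := by positivity
  refine le_of_forall_pos_le_add fun δ hδ => ?_
  have h := key (δ / (M.toReal + 1)) (by positivity)
  rw [div_mul_cancel₀ _ hM1.ne'] at h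
  linarith
end

section
/- Vanishing of the quadratic integral on the high-frequency region (Step 4 of the proof of Theorem 3.5, abstract measure-space form): Let I, J ≥ 1, let (Ω, μ) be a measure space, let X be a topological space, let K ⊆ X be compact, let m : X → (I×J complex matrices) be continuous, and let Φ : Ω → K be Borel measurable. Let Q be a quadratic polynomial on ℂ^J such that Q(λ) = 0 for every λ ∈ ℂ^J with m(η)·λ = 0 for some η ∈ K. Let (w_k)_{k∈ℕ} be a sequence of strongly measurable functions Ω → ℂ^J such that sup_k ∫_Ω ‖w_k‖² dμ < ∞ and ∫_Ω ‖m(Φ(ω))·w_k(ω)‖² dμ(ω) → 0 as k → ∞. Then ∫_Ω Q(w_k(ω)) dμ(ω) → 0 as k → ∞. -/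
open MeasureTheory Filter
open scoped BigOperators ENNReal Topology

/-!
The proof rests on a pointwise inequality: for every `ε > 0` there is a constant `C` with
`|Q(λ)| ≤ ε ‖λ‖² + C ‖m(η) λ‖²` for all `η ∈ K` and all `λ` (`exists_quadratic_bound`).
By homogeneity it suffices to take `λ` in the unit sphere, and there it follows from
compactness: on the compact set of pairs `(η, λ)` with `|Q(λ)| ≥ ε` the continuous function
`‖m(η) λ‖²` has no zero, because `Q` vanishes on the kernels of `m(η)`, so it is bounded below
by a positive constant. Integrating the inequality along `w_k` bounds `|∫ Q(w_k)|` by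
`ε M + C ∫ ‖m(Φ) w_k‖²`; the second term tends to zero and `ε` is arbitrary.
-/

/-- The pointwise bound `|Q(λ)| ≤ ε ‖λ‖² + C ‖m(η) λ‖²`, uniform over `η ∈ K`. Here `‖lam‖` is the
sup norm of `Fin J → ℂ`, which is dominated by the Euclidean norm. -/
theorem exists_quadratic_bound {I J : ℕ} {X : Type*} [TopologicalSpace X]
    {K : Set X} (hK : IsCompact K)
    {m : X → Matrix (Fin I) (Fin J) ℂ} (hm : Continuous m)
    {Q : (Fin J → ℂ) → ℂ} (hQcont : Continuous Q)
    (hQhom : ∀ (r : ℝ) (lam : Fin J → ℂ), Q ((r : ℂ) • lam) = (r : ℂ) ^ 2 * Q lam)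
    (hcone : ∀ lam : Fin J → ℂ, (∃ η ∈ K, (m η).mulVec lam = 0) → Q lam = 0)
    {ε : ℝ} (hε : 0 < ε) :
    ∃ C : ℝ, 0 ≤ C ∧ ∀ η ∈ K, ∀ lam : Fin J → ℂ,
      ‖Q lam‖ ≤ ε * ‖lam‖ ^ 2 + C * ∑ i, ‖(m η).mulVec lam i‖ ^ 2 := by
  let A : X × (Fin J → ℂ) → ℝ := fun p => ∑ i, ‖(m p.1).mulVec p.2 i‖ ^ 2
  have hA : Continuous A := by
    have h : Continuous fun p : X × (Fin J → ℂ) => (m p.1).mulVec p.2 :=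
      (hm.comp continuous_fst).matrix_mulVec continuous_snd
    exact continuous_finsetSum _ fun i _ => ((continuous_apply i).comp h).norm.pow 2
  have hA0 : ∀ p, 0 ≤ A p := fun p => Finset.sum_nonneg fun i _ => by positivity
  let S : Set (X × (Fin J → ℂ)) := K ×ˢ Metric.sphere 0 1
  have hS : IsCompact S := hK.prod (isCompact_sphere 0 1)
  have hQ2 : Continuous fun p : X × (Fin J → ℂ) => ‖Q p.2‖ := (hQcont.comp continuous_snd).norm
  let T := S ∩ {p | ε ≤ ‖Q p.2‖}
  have hT : IsCompact T := hS.inter_right (isClosed_le continuous_const hQ2)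
  have hsphere : ∃ C : ℝ, 0 ≤ C ∧ ∀ p ∈ S, ‖Q p.2‖ ≤ ε + C * A p := by
    rcases T.eq_empty_or_nonempty with hTe | hTn
    · refine ⟨0, le_rfl, fun p hp => ?_⟩
      by_contra! h
      have : p ∈ T := ⟨hp, by simp at h; exact h.le⟩
      simp [hTe] at this
    · obtain ⟨p₀, hp₀, hmin⟩ := hT.exists_isMinOn hTn hA.continuousOn
      obtain ⟨p₁, -, hmax⟩ := hT.exists_isMaxOn hTn hQ2.continuousOn
      have hpos : 0 < A p₀ := by
        refine lt_of_le_of_ne (hA0 _) fun h0 => ?_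
        have hz : (m p₀.1).mulVec p₀.2 = 0 := by
          funext i
          have := (Finset.sum_eq_zero_iff_of_nonneg
            (fun i _ => by positivity)).1 h0.symm i (Finset.mem_univ i)
          simpa using this
        have h1 : ε ≤ ‖Q p₀.2‖ := hp₀.2
        rw [hcone _ ⟨p₀.1, hp₀.1.1, hz⟩, norm_zero] at h1
        linarith
      have hC : 0 ≤ ‖Q p₁.2‖ / A p₀ := by positivity
      refine ⟨_, hC, fun p hp => ?_⟩
      by_cases hpT : ε ≤ ‖Q p.2‖
      · have h1 : ‖Q p.2‖ ≤ ‖Q p₁.2‖ := hmax ⟨hp, hpT⟩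
        have h2 : A p₀ ≤ A p := hmin ⟨hp, hpT⟩
        have h3 := mul_le_mul_of_nonneg_left h2 hC
        rw [div_mul_cancel₀ _ hpos.ne'] at h3
        linarith
      · have := mul_nonneg hC (hA0 p)
        linarith
  obtain ⟨C, hC, hCS⟩ := hsphere
  refine ⟨C, hC, fun η hη lam => ?_⟩
  by_cases h0 : lam = 0
  · have : Q lam = 0 := hcone _ ⟨η, hη, by simp [h0]⟩
    rw [this, norm_zero]
    positivity
  have hn : 0 < ‖lam‖ := norm_pos_iff.2 h0
  obtain ⟨u, hu, hlam⟩ : ∃ u : Fin J → ℂ, ‖u‖ = 1 ∧ lam = ((‖lam‖ : ℝ) : ℂ) • u := by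
    refine ⟨((‖lam‖⁻¹ : ℝ) : ℂ) • lam, ?_, ?_⟩
    · rw [norm_smul, Complex.norm_real, norm_inv, norm_norm, inv_mul_cancel₀ hn.ne']
    · rw [smul_smul, ← Complex.ofReal_mul, mul_inv_cancel₀ hn.ne', Complex.ofReal_one, one_smul]
  have key : ‖Q u‖ ≤ ε + C * ∑ i, ‖(m η).mulVec u i‖ ^ 2 :=
    hCS (η, u) ⟨hη, by simpa using hu⟩
  generalize ‖lam‖ = r at hn hlam ⊢
  subst hlam
  have hsum : ∑ i, ‖(m η).mulVec ((r : ℂ) • u) i‖ ^ 2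
      = r ^ 2 * ∑ i, ‖(m η).mulVec u i‖ ^ 2 := by
    rw [Finset.mul_sum]
    refine Finset.sum_congr rfl fun i _ => ?_
    rw [Matrix.mulVec_smul, Pi.smul_apply, norm_smul, Complex.norm_real, mul_pow,
      Real.norm_eq_abs, sq_abs]
  rw [hQhom, hsum, norm_mul, norm_pow, Complex.norm_real, Real.norm_eq_abs, sq_abs]
  nlinarith [mul_le_mul_of_nonneg_left key (sq_nonneg r)]

/-- Vanishing of the quadratic integral on the high-frequency region (Step 4 of the
proof of Theorem 3.5, abstract measure-space form): if `Q = 0` on the cone of the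
multiplier `m` over the compact set `K`, the sequence `(w_k)` is bounded in `L²` and
`∫ ‖m(Φ(·))·w_k‖² dμ → 0`, then `∫ Q(w_k) dμ → 0`. -/
theorem integral_quadratic_tendsto_zero (I J : ℕ) (hI : 1 ≤ I) (hJ : 1 ≤ J)
    (Ω : Type*) [MeasurableSpace Ω] (μ : Measure Ω)
    (X : Type*) [TopologicalSpace X] [MeasurableSpace X] [BorelSpace X]
    (K : Set X) (hK : IsCompact K)
    (m : X → Matrix (Fin I) (Fin J) ℂ) (hm : Continuous m)
    (Φ : Ω → X) (hΦ : Measurable Φ) (hΦK : ∀ ω, Φ ω ∈ K)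
    (Qc : Fin J → Fin J → ℂ) (Q : (Fin J → ℂ) → ℂ)
    (hQ : ∀ lam : Fin J → ℂ,
      Q lam = ∑ j : Fin J, ∑ l : Fin J, Qc j l * lam j * (starRingEnd ℂ) (lam l))
    (hcone : ∀ lam : Fin J → ℂ, (∃ η ∈ K, (m η).mulVec lam = 0) → Q lam = 0)
    (w : ℕ → Ω → (Fin J → ℂ))
    (hmeas : ∀ k, StronglyMeasurable (w k))
    (hbound : ∃ M : ℝ≥0∞, M < ⊤ ∧ ∀ k,
      (∫⁻ ω, ∑ j : Fin J, (‖w k ω j‖₊ : ℝ≥0∞) ^ 2 ∂μ) ≤ M)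
    (hconv : Tendsto
      (fun k => ∫⁻ ω, ∑ i : Fin I, (‖(m (Φ ω)).mulVec (w k ω) i‖₊ : ℝ≥0∞) ^ 2 ∂μ)
      atTop (𝓝 0)) :
    Tendsto (fun k => ∫ ω, Q (w k ω) ∂μ) atTop (𝓝 0) := by
  obtain ⟨M, hM, hMk⟩ := hbound
  have hQcont : Continuous Q := by
    rw [show Q = _ from funext hQ]
    fun_prop
  have hQhom : ∀ (r : ℝ) (lam : Fin J → ℂ), Q ((r : ℂ) • lam) = (r : ℂ) ^ 2 * Q lam := by
    intro r lam
    simp only [hQ, Finset.mul_sum, Pi.smul_apply, smul_eq_mul, map_mul, Complex.conj_ofReal]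
    refine Finset.sum_congr rfl fun j _ => Finset.sum_congr rfl fun l _ => by ring
  rw [tendsto_zero_iff_enorm_tendsto_zero, ENNReal.tendsto_nhds_zero]
  intro δ hδ
  obtain ⟨ε, hε, hεM⟩ := ENNReal.exists_nnreal_pos_mul_lt hM.ne hδ.ne'
  obtain ⟨C, hC, hb⟩ := exists_quadratic_bound hK hm hQcont hQhom hcone
    (ε := (ε : ℝ)) (by exact_mod_cast hε)
  lift C to NNReal using hC
  have hpt : ∀ k ω, ‖Q (w k ω)‖ₑ ≤ (ε : ℝ≥0∞) * ∑ j, (‖w k ω j‖₊ : ℝ≥0∞) ^ 2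
      + (C : ℝ≥0∞) * ∑ i, (‖(m (Φ ω)).mulVec (w k ω) i‖₊ : ℝ≥0∞) ^ 2 := by
    intro k ω
    have h1 := hb (Φ ω) (hΦK ω) (w k ω)
    have h2 : ‖w k ω‖ ^ 2 ≤ ∑ j, ‖w k ω j‖ ^ 2 := by
      have : Nonempty (Fin J) := ⟨⟨0, hJ⟩⟩
      obtain ⟨j, hj⟩ := Finite.exists_max fun j => ‖w k ω j‖
      have h3 : ‖w k ω‖ ≤ ‖w k ω j‖ := (pi_norm_le_iff_of_nonneg (norm_nonneg _)).2 hj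
      calc ‖w k ω‖ ^ 2 ≤ ‖w k ω j‖ ^ 2 := by gcongr
        _ ≤ _ := Finset.single_le_sum (f := fun j => ‖w k ω j‖ ^ 2)
          (fun _ _ => by positivity) (Finset.mem_univ j)
    have h4 : ‖Q (w k ω)‖ ≤ ε * ∑ j, ‖w k ω j‖ ^ 2
        + C * ∑ i, ‖(m (Φ ω)).mulVec (w k ω) i‖ ^ 2 :=
      h1.trans (by gcongr)
    have h5 : ‖Q (w k ω)‖₊ ≤ ε * ∑ j, ‖w k ω j‖₊ ^ 2
        + C * ∑ i, ‖(m (Φ ω)).mulVec (w k ω) i‖₊ ^ 2 := by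
      rw [← NNReal.coe_le_coe]
      push_cast
      exact h4
    rw [enorm_eq_nnnorm]
    exact_mod_cast h5
  have hint : ∀ k, ‖∫ ω, Q (w k ω) ∂μ‖ₑ ≤ (ε : ℝ≥0∞) * M
      + C * ∫⁻ ω, ∑ i, (‖(m (Φ ω)).mulVec (w k ω) i‖₊ : ℝ≥0∞) ^ 2 ∂μ := by
    intro k
    have hwm : Measurable fun ω => (ε : ℝ≥0∞) * ∑ j, (‖w k ω j‖₊ : ℝ≥0∞) ^ 2 := by
      have := (hmeas k).measurable
      fun_prop
    refine (enorm_integral_le_lintegral_enorm _).trans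
      ((lintegral_mono (hpt k)).trans ?_)
    rw [lintegral_add_left hwm, lintegral_const_mul' _ _ ENNReal.coe_ne_top,
      lintegral_const_mul' _ _ ENNReal.coe_ne_top]
    gcongr
    exact hMk k
  have hlim : Tendsto (fun k => (ε : ℝ≥0∞) * M
      + C * ∫⁻ ω, ∑ i, (‖(m (Φ ω)).mulVec (w k ω) i‖₊ : ℝ≥0∞) ^ 2 ∂μ)
      atTop (𝓝 ((ε : ℝ≥0∞) * M)) := by
    simpa using tendsto_const_nhds.add
      (ENNReal.Tendsto.const_mul hconv (Or.inr (ENNReal.coe_ne_top (r := C))))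
  filter_upwards [hlim.eventually_lt_const hεM] with k hk
  exact (hint k).trans hk.le
end
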